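/- arXiv:1309.6102 — 2 statements merged into one kernel-verified Lean document; each statement's English description precedes it below -/
import Mathlib

section
/- Let p ≥ 2 be an integer and let 2 ≤ k ≤ p−1 be an integer. Let M > 0, h ≥ 1, R > 1; let ω ∈ C^∞(ℝ) satisfy |ω(ξ)| ≤ 1 for all ξ, ω(ξ) = 0 for |ξ| ≤ 1, and ω constant on each of {ξ ≥ R} and {ξ ≤ −R}; let ψ ∈ C₀^∞(ℝ) with 0 ≤ ψ ≤ 1, ψ(y) = 1 for |y| ≤ 1/2 and ψ(y) = 0 for |y| ≥ 1. Define λ_{p−k}(x,ξ) := M·ω(ξ/h)·⟨ξ⟩_h^{−k+1}·∫₀ˣ ⟨y⟩^{−(p−k)/(p−1)} ψ(⟨y⟩/⟨ξ⟩_h^{p−1}) dy. Then for all α, β ∈ ℕ there exists C_{k,α,β} > 0, independent of h, M, x, ξ, such that |∂_ξ^α ∂_x^β λ_{p−k}(x,ξ)| ≤ C_{k,α,β}·M·⟨x⟩^{−β}·⟨ξ⟩_h^{−α} for all x, ξ ∈ ℝ; moreover, for β ≥ 1 one has the refined bound |∂_ξ^α ∂_x^β λ_{p−k}(x,ξ)|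 ≤ C_{k,α,β}·M·⟨x⟩^{(k−1)/(p−1)−β}·⟨ξ⟩_h^{−α−k+1}·χ_ξ(x), where χ_ξ is the characteristic function of the set {x ∈ ℝ : ⟨x⟩ ≤ ⟨ξ⟩_h^{p−1}}. -/
open MeasureTheory Real

noncomputable section

/-- The Japanese bracket `⟨x⟩ = (1 + x²)^(1/2)`. -/
def jb (x : ℝ) : ℝ := Real.sqrt (1 + x ^ 2)

/-- `⟨ξ⟩ₕ = (h² + ξ²)^(1/2)`. -/
def jbh (h ξ : ℝ) : ℝ := Real.sqrt (h ^ 2 + ξ ^ 2)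

/-- `HasSymbolBounds s n b A` says that each `A i` is `n` times differentiable and that, for every
`m ≤ n`, its `m`-th derivative is at most a constant times `b i / s i ^ m`, uniformly in `i`. -/
def HasSymbolBounds {ι : Type*} (s : ι → ℝ → ℝ) :
    ℕ → (ι → ℝ → ℝ) → (ι → ℝ → ℝ) → Prop
  | 0, b, A => ∃ C, ∀ i ξ, |A i ξ| ≤ C * b i ξ
  | n + 1, b, A => (∃ C, ∀ i ξ, |A i ξ| ≤ C * b i ξ) ∧ (∀ i, Differentiable ℝ (A i)) ∧
      HasSymbolBounds s n (fun i ξ => b i ξ / s i ξ) (fun i => deriv (A i))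

namespace HasSymbolBounds

variable {ι : Type*} {s b b' A A' : ι → ℝ → ℝ} {n : ℕ}

lemma exists_bound (hA : HasSymbolBounds s n b A) : ∃ C, ∀ i ξ, |A i ξ| ≤ C * b i ξ := by
  cases n with
  | zero => exact hA
  | succ n => exact hA.1

lemma of_succ (hA : HasSymbolBounds s (n + 1) b A) : HasSymbolBounds s n b A := by
  induction n generalizing b A with
  | zero => exact hA.1
  | succ n ih => exact ⟨hA.1, hA.2.1, ih hA.2.2⟩

lemma zero : HasSymbolBounds s n b (fun _ _ => 0) := by
  induction n generalizing b with
  | zero => exact ⟨0, by simp⟩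
  | succ n ih => exact ⟨⟨0, by simp⟩, fun i => differentiable_const 0, by simpa using ih⟩

lemma const (c : ℝ) : HasSymbolBounds s n (fun _ _ => 1) (fun _ _ => c) := by
  cases n with
  | zero => exact ⟨|c|, by simp⟩
  | succ n => exact ⟨⟨|c|, by simp⟩, fun i => differentiable_const c, by simpa using zero⟩

lemma add (hA : HasSymbolBounds s n b A) (hA' : HasSymbolBounds s n b A') :
    HasSymbolBounds s n b (fun i ξ => A i ξ + A' i ξ) := by
  have key : ∀ {b A A' : ι → ℝ → ℝ}, (∃ C, ∀ i ξ, |A i ξ| ≤ C * b i ξ) →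
      (∃ C, ∀ i ξ, |A' i ξ| ≤ C * b i ξ) → ∃ C, ∀ i ξ, |A i ξ + A' i ξ| ≤ C * b i ξ := by
    rintro b A A' ⟨C, hC⟩ ⟨C', hC'⟩
    refine ⟨C + C', fun i ξ => (abs_add_le _ _).trans ?_⟩
    linarith [hC i ξ, hC' i ξ]
  induction n generalizing b A A' with
  | zero => exact key hA hA'
  | succ n ih =>
    refine ⟨key hA.1 hA'.1, fun i => (hA.2.1 i).add (hA'.2.1 i), ?_⟩
    have := ih hA.2.2 hA'.2.2
    convert this using 3 with i ξ
    exact deriv_fun_add (hA.2.1 i _) (hA'.2.1 i _)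

lemma mul (hA : HasSymbolBounds s n b A) (hA' : HasSymbolBounds s n b' A') :
    HasSymbolBounds s n (fun i ξ => b i ξ * b' i ξ) (fun i ξ => A i ξ * A' i ξ) := by
  have key : ∀ {b b' A A' : ι → ℝ → ℝ}, (∃ C, ∀ i ξ, |A i ξ| ≤ C * b i ξ) →
      (∃ C, ∀ i ξ, |A' i ξ| ≤ C * b' i ξ) →
      ∃ C, ∀ i ξ, |A i ξ * A' i ξ| ≤ C * (b i ξ * b' i ξ) := by
    rintro b b' A A' ⟨C, hC⟩ ⟨C', hC'⟩
    refine ⟨C * C', fun i ξ => ?_⟩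
    rw [abs_mul, mul_mul_mul_comm]
    exact mul_le_mul (hC i ξ) (hC' i ξ) (abs_nonneg _) ((abs_nonneg _).trans (hC i ξ))
  induction n generalizing b b' A A' with
  | zero => exact key hA hA'
  | succ n ih =>
    refine ⟨key hA.1 hA'.1, fun i => (hA.2.1 i).mul (hA'.2.1 i), ?_⟩
    have h₁ := ih hA.2.2 hA'.of_succ
    have h₂ := ih hA.of_succ hA'.2.2
    have e₁ : (fun i ξ => b i ξ / s i ξ * b' i ξ) = fun i ξ => b i ξ * b' i ξ / s i ξ := by
      funext i ξ; ring
    have e₂ : (fun i ξ => b i ξ * (b' i ξ / s i ξ)) = fun i ξ => b i ξ * b' i ξ / s i ξ := by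
      funext i ξ; ring
    rw [e₁] at h₁
    rw [e₂] at h₂
    convert h₁.add h₂ using 3 with i ξ
    exact deriv_fun_mul (hA.2.1 i _) (hA'.2.1 i _)

lemma iteratedDeriv_le (hA : HasSymbolBounds s n b A) :
    ∃ C, ∀ i ξ, |iteratedDeriv n (A i) ξ| ≤ C * (b i ξ / s i ξ ^ n) := by
  induction n generalizing b A with
  | zero => simpa using hA.exists_bound
  | succ n ih =>
    obtain ⟨C, hC⟩ := ih hA.2.2
    refine ⟨C, fun i ξ => ?_⟩
    rw [iteratedDeriv_succ', pow_succ', ← div_div]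
    exact hC i ξ

/-- A sequence `E j` closed under differentiation up to a logarithmic-type factor `l` of order
`-1` multiplies symbols. -/
lemma mul_of_hasDerivAt {E : ℕ → ι → ℝ → ℝ} {B l : ι → ℝ → ℝ}
    (hl : ∀ n, HasSymbolBounds s n (fun i ξ => 1 / s i ξ) l)
    (hE : ∀ j i ξ, HasDerivAt (E j i) (l i ξ * E (j + 1) i ξ) ξ)
    (hB : ∀ j, ∃ C, ∀ i ξ, |E j i ξ| ≤ C * B i ξ)
    (hA : HasSymbolBounds s n b A) (j : ℕ) :
    HasSymbolBounds s n (fun i ξ => b i ξ * B i ξ) (fun i ξ => A i ξ * E j i ξ) := by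
  have key (hA : ∃ C, ∀ i ξ, |A i ξ| ≤ C * b i ξ) :=
    mul (n := 0) (s := s) (b := b) (b' := B) (A := A) (A' := E j) hA (hB j)
  induction n generalizing b A j with
  | zero => exact key hA
  | succ n ih =>
    refine ⟨key hA.1, fun i => (hA.2.1 i).mul fun ξ => (hE j i ξ).differentiableAt, ?_⟩
    have h₁ := ih hA.2.2 j fun h => mul (n := 0) h (hB j)
    have h₂ := ih (hA.of_succ.mul (hl n)) (j + 1) fun h => mul (n := 0) h (hB (j + 1))
    have e₁ : (fun i ξ => b i ξ / s i ξ * B i ξ) = fun i ξ => b i ξ * B i ξ / s i ξ := by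
      funext i ξ; ring
    have e₂ : (fun i ξ => b i ξ * (1 / s i ξ) * B i ξ) = fun i ξ => b i ξ * B i ξ / s i ξ := by
      funext i ξ; ring
    rw [e₁] at h₁
    rw [e₂] at h₂
    convert h₁.add h₂ using 3 with i ξ
    rw [((hA.2.1 i _).hasDerivAt.fun_mul (hE j i _)).deriv]
    ring

end HasSymbolBounds

lemma jbh_pos {h : ℝ} (hh : 1 ≤ h) (ξ : ℝ) : 0 < jbh h ξ := by
  unfold jbh; positivity

lemma abs_le_jbh (h ξ : ℝ) : |ξ| ≤ jbh h ξ :=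
  Real.abs_le_sqrt (by nlinarith [sq_nonneg h])

lemma jb_eq_jbh : jb = jbh 1 := by
  funext x; simp [jb, jbh]

lemma jbh_eq_mul_jb {h : ℝ} (hh : 1 ≤ h) (ξ : ℝ) : jbh h ξ = h * jb (ξ / h) := by
  have h0 : 0 < h := by linarith
  rw [jbh, jb, ← Real.sqrt_sq h0.le, ← Real.sqrt_mul (by positivity), Real.sqrt_sq h0.le]
  congr 1
  field_simp

lemma contDiff_jbh {h : ℝ} (hh : 1 ≤ h) {n : WithTop ℕ∞} : ContDiff ℝ n (jbh h) := by
  unfold jbh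
  exact ContDiff.sqrt (by fun_prop) fun x => by positivity

lemma jb_pos (x : ℝ) : 0 < jb x := jb_eq_jbh ▸ jbh_pos le_rfl x

lemma contDiff_jb {n : WithTop ℕ∞} : ContDiff ℝ n jb := jb_eq_jbh ▸ contDiff_jbh le_rfl

lemma hasDerivAt_jbh {h : ℝ} (hh : 1 ≤ h) (ξ : ℝ) :
    HasDerivAt (jbh h) (ξ / jbh h ξ) ξ := by
  have h1 : HasDerivAt (fun ξ : ℝ => h ^ 2 + ξ ^ 2) (2 * ξ) ξ := by
    simpa using (hasDerivAt_pow 2 ξ).const_add (h ^ 2)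
  have h2 := h1.sqrt (by positivity)
  rwa [mul_div_mul_left _ _ (two_ne_zero' ℝ)] at h2

lemma hasDerivAt_jbh_rpow {h : ℝ} (hh : 1 ≤ h) (r ξ : ℝ) :
    HasDerivAt (fun ξ => jbh h ξ ^ r) (r * ξ * jbh h ξ ^ (r - 2)) ξ := by
  have hpos := jbh_pos hh ξ
  convert (hasDerivAt_jbh hh ξ).rpow_const (Or.inl hpos.ne') using 1
  rw [show r - 1 = r - 2 + 1 by ring, Real.rpow_add_one hpos.ne']
  field_simp

section Brackets

variable {ι : Type*} {H : ι → ℝ}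

lemma hasSymbolBounds_id (hH : ∀ i, 1 ≤ H i) (n : ℕ) :
    HasSymbolBounds (fun i => jbh (H i)) n (fun i => jbh (H i)) (fun _ ξ => ξ) := by
  have key : ∃ C, ∀ (i : ι) ξ, |ξ| ≤ C * jbh (H i) ξ :=
    ⟨1, fun i ξ => by simpa using abs_le_jbh (H i) ξ⟩
  cases n with
  | zero => exact key
  | succ n =>
    refine ⟨key, fun i => differentiable_id, ?_⟩
    convert HasSymbolBounds.const 1 using 3 with i ξ i
    · exact div_self (jbh_pos (hH i) _).ne'
    · simp

lemma hasSymbolBounds_jbh_rpow (hH : ∀ i, 1 ≤ H i) (r : ℝ) (n : ℕ) :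
    HasSymbolBounds (fun i => jbh (H i)) n (fun i ξ => jbh (H i) ξ ^ r)
      (fun i ξ => jbh (H i) ξ ^ r) := by
  have key (r : ℝ) : ∃ C, ∀ (i : ι) ξ, |jbh (H i) ξ ^ r| ≤ C * jbh (H i) ξ ^ r :=
    ⟨1, fun i ξ => by rw [one_mul, abs_of_pos (Real.rpow_pos_of_pos (jbh_pos (hH i) ξ) r)]⟩
  induction n generalizing r with
  | zero => exact key r
  | succ n ih =>
    refine ⟨key r, fun i ξ => (hasDerivAt_jbh_rpow (hH i) r ξ).differentiableAt, ?_⟩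
    convert ((HasSymbolBounds.const r).mul (hasSymbolBounds_id hH n)).mul (ih (r - 2))
      using 3 with i ξ i ξ
    · have hpos := jbh_pos (hH i) ξ
      rw [one_mul, Real.rpow_sub hpos, Real.rpow_two]
      field_simp
    · exact (hasDerivAt_jbh_rpow (hH i) r ξ).deriv

lemma hasSymbolBounds_logDeriv (hH : ∀ i, 1 ≤ H i) (c : ℝ) (n : ℕ) :
    HasSymbolBounds (fun i => jbh (H i)) n (fun i ξ => 1 / jbh (H i) ξ)
      (fun i ξ => c * (ξ / jbh (H i) ξ ^ 2)) := by
  convert ((HasSymbolBounds.const c).mul (hasSymbolBounds_id hH n)).mul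
    (hasSymbolBounds_jbh_rpow hH (-2) n) using 3 with i ξ i ξ
  all_goals
    have hpos := jbh_pos (hH i) ξ
    rw [Real.rpow_neg hpos.le, Real.rpow_two]
    field_simp

lemma hasSymbolBounds_comp_div (hH : ∀ i, 1 ≤ H i) {f : ℝ → ℝ}
    (hf : ContDiff ℝ (⊤ : ℕ∞) f) (hfb : ∃ C, ∀ x, |f x| ≤ C)
    (hf' : HasCompactSupport (deriv f)) (n : ℕ) :
    HasSymbolBounds (fun i => jbh (H i)) n (fun _ _ => 1) (fun i ξ => f (ξ / H i)) := by
  induction n generalizing f with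
  | zero =>
    obtain ⟨C, hC⟩ := hfb
    exact ⟨C, fun i ξ => by simpa using hC (ξ / H i)⟩
  | succ n ih =>
    obtain ⟨C, hC⟩ := hfb
    have hd (i : ι) (ξ : ℝ) :
        HasDerivAt (fun ξ => f (ξ / H i)) (deriv f (ξ / H i) * (1 / H i)) ξ :=
      ((hf.differentiable (by simp)) (ξ / H i)).hasDerivAt.comp ξ
        ((hasDerivAt_id ξ).div_const (H i))
    refine ⟨⟨C, fun i ξ => by simpa using hC (ξ / H i)⟩,
      fun i ξ => (hd i ξ).differentiableAt, ?_⟩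
    have hg : ContDiff ℝ (⊤ : ℕ∞) fun t => deriv f t * jb t :=
      (contDiff_infty_iff_deriv.1 hf).2.mul contDiff_jb
    have hgc : HasCompactSupport fun t => deriv f t * jb t := hf'.mul_right
    have hgb : ∃ C, ∀ x, |deriv f x * jb x| ≤ C := by
      simpa using hgc.exists_bound_of_continuous hg.continuous
    convert (ih hg hgb hgc.deriv).mul (hasSymbolBounds_jbh_rpow hH (-1) n) using 3 with i ξ i ξ
    · rw [Real.rpow_neg_one, one_mul, one_div]
    · have h0 : 0 < H i := by linarith [hH i]
      have hj := jb_pos (ξ / H i)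
      rw [(hd i ξ).deriv, Real.rpow_neg_one, jbh_eq_mul_jb (hH i)]
      field_simp

end Brackets

/-- The Euler operator `t d/dt`. -/
def eulerOp (φ : ℝ → ℝ) (t : ℝ) : ℝ := t * deriv φ t

/-- Smooth functions vanishing outside `[-1, 1]`. -/
def IsCutoff (φ : ℝ → ℝ) : Prop := ContDiff ℝ (⊤ : ℕ∞) φ ∧ ∀ t, 1 < |t| → φ t = 0

namespace IsCutoff

variable {φ g : ℝ → ℝ}

lemma euler (hφ : IsCutoff φ) : IsCutoff (eulerOp φ) := by
  refine ⟨contDiff_id.mul (contDiff_infty_iff_deriv.1 hφ.1).2, fun t ht => ?_⟩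
  have : φ =ᶠ[nhds t] fun _ => 0 := by
    filter_upwards [(isOpen_lt continuous_const continuous_abs).mem_nhds ht] with u hu
    exact hφ.2 u hu
  simp [eulerOp, this.deriv_eq]

lemma iterate (hφ : IsCutoff φ) (j : ℕ) : IsCutoff (eulerOp^[j] φ) := by
  induction j with
  | zero => exact hφ
  | succ j ih => rw [Function.iterate_succ_apply']; exact ih.euler

lemma exists_bound (hφ : IsCutoff φ) : ∃ C, 0 ≤ C ∧ ∀ t, |φ t| ≤ C := by
  have hc : HasCompactSupport φ := by
    refine HasCompactSupport.intro (isCompact_Icc (a := -1) (b := 1)) fun t ht => hφ.2 t ?_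
    contrapose! ht
    exact abs_le.1 ht
  obtain ⟨C, hC⟩ := hc.exists_bound_of_continuous hφ.1.continuous
  exact ⟨C, (norm_nonneg _).trans (hC 0), hC⟩

lemma hasDerivAt (hφ : IsCutoff φ) (t : ℝ) : HasDerivAt φ (deriv φ t) t :=
  (hφ.1.differentiable (by simp) t).hasDerivAt

/-- Dilating a cutoff in the denominator. -/
lemma hasDerivAt_div (hφ : IsCutoff φ) (u : ℝ) {W : ℝ} (hW : 0 < W) :
    HasDerivAt (fun W => φ (u / W)) (-(1 / W) * eulerOp φ (u / W)) W := by
  have h1 : HasDerivAt (fun W : ℝ => u / W) (-u / W ^ 2) W := by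
    simpa using (hasDerivAt_const W u).fun_div (hasDerivAt_id W) hW.ne'
  refine ((hφ.hasDerivAt (u / W)).comp W h1).congr_deriv ?_
  simp only [eulerOp]
  field_simp

lemma hasDerivAt_jb_div (hφ : IsCutoff φ) (x W : ℝ) :
    HasDerivAt (fun x => φ (jb x / W)) (x / jb x ^ 2 * eulerOp φ (jb x / W)) x := by
  have hj := jb_pos x
  have h1 : HasDerivAt (fun x : ℝ => jb x / W) (x / jb x / W) x := by
    have := hasDerivAt_jbh le_rfl x
    rw [← jb_eq_jbh] at this
    exact this.div_const W
  refine ((hφ.hasDerivAt (jb x / W)).comp x h1).congr_deriv ?_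
  simp only [eulerOp]
  field_simp

lemma contDiff_mul_jb_div (hφ : IsCutoff φ) (hg : ContDiff ℝ (⊤ : ℕ∞) g) (W : ℝ) :
    ContDiff ℝ (⊤ : ℕ∞) fun x => g x * φ (jb x / W) :=
  hg.mul (hφ.1.comp (contDiff_jb.div_const W))

lemma iteratedDeriv_succ_mul_jb_div (hφ : IsCutoff φ) (hg : ContDiff ℝ (⊤ : ℕ∞) g)
    (b : ℕ) (x W : ℝ) :
    iteratedDeriv (b + 1) (fun x => g x * φ (jb x / W)) x =
      iteratedDeriv b (fun x => deriv g x * φ (jb x / W)) x +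
        iteratedDeriv b (fun x => g x * (x / jb x ^ 2) * eulerOp φ (jb x / W)) x := by
  have hg' := (contDiff_infty_iff_deriv.1 hg).2
  have hgl : ContDiff ℝ (⊤ : ℕ∞) fun x => g x * (x / jb x ^ 2) :=
    hg.mul (contDiff_id.div (contDiff_jb.pow 2) fun x => (pow_pos (jb_pos x) 2).ne')
  rw [iteratedDeriv_succ', ← iteratedDeriv_add
    ((hφ.contDiff_mul_jb_div hg' W).contDiffAt.of_le (by exact_mod_cast le_top))
    ((hφ.euler.contDiff_mul_jb_div hgl W).contDiffAt.of_le (by exact_mod_cast le_top))]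
  congr 1
  funext y
  rw [((hg.differentiable (by simp) y).hasDerivAt.fun_mul (hφ.hasDerivAt_jb_div y W)).deriv,
    Pi.add_apply]
  ring

lemma hasDerivAt_iteratedDeriv (hφ : IsCutoff φ) (hg : ContDiff ℝ (⊤ : ℕ∞) g)
    (b : ℕ) (x : ℝ) {W : ℝ} (hW : 0 < W) :
    HasDerivAt (fun W => iteratedDeriv b (fun x => g x * φ (jb x / W)) x)
      (-(1 / W) * iteratedDeriv b (fun x => g x * eulerOp φ (jb x / W)) x) W := by
  induction b generalizing g φ with
  | zero =>
    simp only [iteratedDeriv_zero]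
    exact ((hφ.hasDerivAt_div (jb x) hW).const_mul (g x)).congr_deriv (by ring)
  | succ b ih =>
    have hgl : ContDiff ℝ (⊤ : ℕ∞) fun x => g x * (x / jb x ^ 2) :=
      hg.mul (contDiff_id.div (contDiff_jb.pow 2) fun x => (pow_pos (jb_pos x) 2).ne')
    simp only [hφ.iteratedDeriv_succ_mul_jb_div hg, hφ.euler.iteratedDeriv_succ_mul_jb_div hg,
      mul_add]
    exact (ih hφ (contDiff_infty_iff_deriv.1 hg).2).add (ih hφ.euler hgl)

lemma exists_abs_iteratedDeriv_le (hφ : IsCutoff φ) (r : ℝ) (b : ℕ) :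
    ∃ C, ∀ W : ℝ, 0 < W → ∀ x,
      |iteratedDeriv b (fun x => jb x ^ r * φ (jb x / W)) x| ≤
        C * (jb x ^ r / jb x ^ b * Set.indicator {x | jb x ≤ W} (fun _ => 1) x) := by
  have hH : ∀ i : {W : ℝ // 0 < W}, 1 ≤ (fun _ => 1 : {W : ℝ // 0 < W} → ℝ) i :=
    fun _ => le_rfl
  obtain ⟨C, hC⟩ := ((hasSymbolBounds_jbh_rpow hH r b).mul_of_hasDerivAt
    (E := fun j (W : {W : ℝ // 0 < W}) x => eulerOp^[j] φ (jb x / W))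
    (B := fun (W : {W : ℝ // 0 < W}) => Set.indicator {x | jb x ≤ W} fun _ => 1)
    (hasSymbolBounds_logDeriv hH 1) (fun j W x => by
      rw [Function.iterate_succ_apply', one_mul, ← jb_eq_jbh]
      exact (hφ.iterate j).hasDerivAt_jb_div x W) (fun j => by
      obtain ⟨C, hC0, hC⟩ := (hφ.iterate j).exists_bound
      refine ⟨C, fun W x => ?_⟩
      by_cases hx : jb x ≤ W
      · simpa [Set.indicator, hx] using hC _
      · have : 1 < |jb x / (W : ℝ)| := by
          rw [abs_of_pos (div_pos (jb_pos x) W.2), one_lt_div W.2]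
          exact not_le.1 hx
        simp [Set.indicator, hx, (hφ.iterate j).2 _ this]) 0).iteratedDeriv_le
  refine ⟨C, fun W hW x => ?_⟩
  rw [div_mul_eq_mul_div]
  simpa [jb_eq_jbh] using hC ⟨W, hW⟩ x

lemma continuous_rpow_mul (hφ : IsCutoff φ) (r W : ℝ) :
    Continuous fun y => jb y ^ r * φ (jb y / W) :=
  (contDiff_jb (n := 0)).continuous.rpow_const (fun x => Or.inl (jb_pos x).ne') |>.mul
    (hφ.1.continuous.comp ((contDiff_jb (n := 0)).continuous.div_const W))

lemma hasDerivAt_integral (hφ : IsCutoff φ) (r x : ℝ) {W : ℝ} (hW : 0 < W) :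
    HasDerivAt (fun W => ∫ y in (0 : ℝ)..x, jb y ^ r * φ (jb y / W))
      (-(1 / W) * ∫ y in (0 : ℝ)..x, jb y ^ r * eulerOp φ (jb y / W)) W := by
  obtain ⟨C, hC0, hC⟩ := hφ.euler.exists_bound
  have hc : Continuous fun y => jb y ^ r :=
    (contDiff_jb (n := 0)).continuous.rpow_const (fun x => Or.inl (jb_pos x).ne')
  have := (intervalIntegral.hasDerivAt_integral_of_dominated_loc_of_deriv_le (μ := volume)
    (F := fun W y => jb y ^ r * φ (jb y / W))
    (F' := fun W y => -(1 / W) * (jb y ^ r * eulerOp φ (jb y / W)))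
    (bound := fun y => 2 / W * (jb y ^ r * C)) (a := 0) (b := x)
    (Ioi_mem_nhds (half_lt_self hW))
    (Filter.Eventually.of_forall fun W => (hφ.continuous_rpow_mul r W).aestronglyMeasurable)
    ((hφ.continuous_rpow_mul r W).intervalIntegrable 0 x)
    ((hφ.euler.continuous_rpow_mul r W).const_mul _).aestronglyMeasurable
    (Filter.Eventually.of_forall fun y _ V hV => ?_)
    ((continuous_const.mul (hc.mul continuous_const)).intervalIntegrable 0 x)
    (Filter.Eventually.of_forall fun y _ V hV => ?_)).2
  · simpa only [intervalIntegral.integral_const_mul] using this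
  · have hV' : W / 2 < V := hV
    have hV0 : 0 < V := (half_pos hW).trans hV'
    have hr := Real.rpow_pos_of_pos (jb_pos y) r
    rw [Real.norm_eq_abs, abs_mul, abs_neg, abs_mul, abs_of_pos hr,
      abs_of_pos (one_div_pos.2 hV0)]
    have h2 : 1 / V ≤ 2 / W := by
      rw [div_le_div_iff₀ hV0 hW]; linarith
    exact mul_le_mul h2 (mul_le_mul_of_nonneg_left (hC _) hr.le) (by positivity) (by positivity)
  · have hV0 : 0 < V := (half_pos hW).trans hV
    exact ((hφ.hasDerivAt_div (jb y) hV0).const_mul (jb y ^ r)).congr_deriv (by ring)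

lemma exists_abs_integral_le (hφ : IsCutoff φ) {δ : ℝ} (hδ : 0 < δ) (hδ1 : δ ≤ 1) :
    ∃ C, ∀ W : ℝ, 0 < W → ∀ x,
      |∫ y in (0 : ℝ)..x, jb y ^ (δ - 1) * φ (jb y / W)| ≤ C * W ^ δ := by
  obtain ⟨C, hC0, hC⟩ := hφ.exists_bound
  have hsmall : ∀ W : ℝ, 0 < W → ∀ x, 0 ≤ x → x ≤ W →
      |∫ y in (0 : ℝ)..x, jb y ^ (δ - 1) * φ (jb y / W)| ≤ C / δ * W ^ δ := by
    intro W hW x hx hxW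
    have h1 : ‖∫ y in (0 : ℝ)..x, jb y ^ (δ - 1) * φ (jb y / W)‖ ≤
        ∫ y in (0 : ℝ)..x, y ^ (δ - 1) * C := by
      refine intervalIntegral.norm_integral_le_of_norm_le hx
        (Filter.Eventually.of_forall fun y hy => ?_)
        ((intervalIntegral.intervalIntegrable_rpow' (by linarith)).mul_const C)
      have hr := Real.rpow_pos_of_pos (jb_pos y) (δ - 1)
      rw [norm_mul, Real.norm_eq_abs, Real.norm_eq_abs, abs_of_pos hr]
      refine mul_le_mul ?_ (hC _) (abs_nonneg _) (Real.rpow_nonneg hy.1.le _)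
      refine Real.rpow_le_rpow_of_nonpos hy.1 ?_ (by linarith)
      rw [jb_eq_jbh]
      exact (le_abs_self y).trans (abs_le_jbh 1 y)
    refine h1.trans ?_
    rw [intervalIntegral.integral_mul_const, integral_rpow (Or.inl (by linarith)),
      sub_add_cancel, Real.zero_rpow hδ.ne', sub_zero, div_mul_eq_mul_div, mul_comm,
      ← div_mul_eq_mul_div]
    exact mul_le_mul_of_nonneg_left (Real.rpow_le_rpow hx hxW hδ.le) (by positivity)
  have hnonneg : ∀ W : ℝ, 0 < W → ∀ x, 0 ≤ x →
      |∫ y in (0 : ℝ)..x, jb y ^ (δ - 1) * φ (jb y / W)| ≤ C / δ * W ^ δ := by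
    intro W hW x hx
    rcases le_total x W with hxW | hxW
    · exact hsmall W hW x hx hxW
    · have hz : ∫ y in W..x, jb y ^ (δ - 1) * φ (jb y / W) = ∫ y in W..x, (0 : ℝ) := by
        refine intervalIntegral.integral_congr_ae (Filter.Eventually.of_forall fun y hy => ?_)
        rw [Set.uIoc_of_le hxW] at hy
        have h1 : 1 < |jb y / W| := by
          rw [abs_of_pos (div_pos (jb_pos y) hW), one_lt_div hW]
          refine hy.1.trans_le ?_
          rw [jb_eq_jbh]
          exact (le_abs_self y).trans (abs_le_jbh 1 y)
        rw [hφ.2 _ h1, mul_zero]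
      rw [← intervalIntegral.integral_add_adjacent_intervals
        ((hφ.continuous_rpow_mul _ W).intervalIntegrable 0 W)
        ((hφ.continuous_rpow_mul _ W).intervalIntegrable W x), hz,
        intervalIntegral.integral_zero, add_zero]
      exact hsmall W hW W hW.le le_rfl
  refine ⟨C / δ, fun W hW x => ?_⟩
  rcases le_total 0 x with hx | hx
  · exact hnonneg W hW x hx
  · have h1 := hnonneg W hW (-x) (by linarith)
    have h2 := intervalIntegral.integral_comp_neg (a := 0) (b := x)
      fun y => jb y ^ (δ - 1) * φ (jb y / W)
    have hev (y : ℝ) : jb (-y) = jb y := by simp [jb]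
    simp only [hev, neg_zero] at h2
    rwa [h2, intervalIntegral.integral_symm, abs_neg]

end IsCutoff

/-- Symbol bounds for functions of `W = ⟨ξ⟩ₕ ^ q` whose `W`-derivatives run through a sequence
`J`, as the Euler operator produces. -/
lemma exists_abs_iteratedDeriv_comp_le {ω : ℝ → ℝ} (hω : ContDiff ℝ (⊤ : ℕ∞) ω)
    (hωb : ∃ C, ∀ x, |ω x| ≤ C) (hω' : HasCompactSupport (deriv ω)) (q r : ℝ)
    {J : ℕ → ℝ → ℝ → ℝ} {B : ℝ → ℝ → ℝ}
    (hJ : ∀ j x W, 0 < W → HasDerivAt (J j x) (-(1 / W) * J (j + 1) x W) W)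
    (hB : ∀ j, ∃ C, ∀ x W, 0 < W → |J j x W| ≤ C * B x W) (n : ℕ) :
    ∃ C, ∀ h, 1 ≤ h → ∀ x ξ,
      |iteratedDeriv n (fun ξ => ω (ξ / h) * jbh h ξ ^ r * J 0 x (jbh h ξ ^ q)) ξ| ≤
        C * (jbh h ξ ^ r * B x (jbh h ξ ^ q) / jbh h ξ ^ n) := by
  have hH : ∀ i : {h : ℝ // 1 ≤ h} × ℝ, 1 ≤ (i.1 : ℝ) := fun i => i.1.2
  have hW (i : {h : ℝ // 1 ≤ h} × ℝ) (ξ : ℝ) : 0 < jbh i.1 ξ ^ q :=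
    Real.rpow_pos_of_pos (jbh_pos (hH i) ξ) q
  obtain ⟨C, hC⟩ := (((hasSymbolBounds_comp_div hH hω hωb hω' n).mul
    (hasSymbolBounds_jbh_rpow hH r n)).mul_of_hasDerivAt
    (E := fun j i ξ => J j i.2 (jbh i.1 ξ ^ q)) (B := fun i ξ => B i.2 (jbh i.1 ξ ^ q))
    (hasSymbolBounds_logDeriv hH (-q)) (fun j i ξ => by
      refine ((hJ j i.2 _ (hW i ξ)).comp ξ (hasDerivAt_jbh_rpow (hH i) q ξ)).congr_deriv ?_
      have hpos := jbh_pos (hH i) ξ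
      have hq := hW i ξ
      rw [Real.rpow_sub hpos, Real.rpow_two]
      field_simp) (fun j => by
      obtain ⟨C, hC⟩ := hB j
      exact ⟨C, fun i ξ => hC i.2 _ (hW i ξ)⟩) 0).iteratedDeriv_le
  refine ⟨C, fun h hh x ξ => ?_⟩
  simpa using hC (⟨h, hh⟩, x) ξ

lemma hasCompactSupport_deriv_of_eventually_const {ω : ℝ → ℝ} {R : ℝ}
    (hωcp : ∀ ξ₁ ξ₂ : ℝ, R ≤ ξ₁ → R ≤ ξ₂ → ω ξ₁ = ω ξ₂)
    (hωcm : ∀ ξ₁ ξ₂ : ℝ, ξ₁ ≤ -R → ξ₂ ≤ -R → ω ξ₁ = ω ξ₂) :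
    HasCompactSupport (deriv ω) := by
  refine HasCompactSupport.intro (isCompact_Icc (a := -R) (b := R)) fun t ht => ?_
  have : ω =ᶠ[nhds t] fun _ => ω t := by
    rcases lt_or_ge t (-R) with h | h
    · filter_upwards [Iio_mem_nhds h] with u hu
      exact hωcm u t (le_of_lt hu) h.le
    · have h' : R < t := by
        by_contra! h2
        exact ht ⟨h, h2⟩
      filter_upwards [Ioi_mem_nhds h'] with u hu
      exact hωcp u t (le_of_lt hu) h'.le
  simp [this.deriv_eq]

/-- estimates for `∂_ξ^α ∂_x^β λ_{p-k}(x,ξ)`, where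
`λ_{p-k}(x,ξ) = M·ω(ξ/h)·⟨ξ⟩ₕ^{-k+1}·∫₀ˣ ⟨y⟩^{-(p-k)/(p-1)} ψ(⟨y⟩/⟨ξ⟩ₕ^{p-1}) dy`,
with constants independent of `h`, `M`, `x`, `ξ`, together with the refined bound for
`β ≥ 1` involving the characteristic function of `{x : ⟨x⟩ ≤ ⟨ξ⟩ₕ^{p-1}}`. -/
theorem stmt3 (p k : ℕ) (hp : 2 ≤ p) (hk2 : 2 ≤ k) (hkp : k ≤ p - 1)
    (R : ℝ) (hR : 1 < R)
    (ω : ℝ → ℝ) (hω : ContDiff ℝ (⊤ : ℕ∞) ω) (hωb : ∀ ξ : ℝ, |ω ξ| ≤ 1)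
    (hω0 : ∀ ξ : ℝ, |ξ| ≤ 1 → ω ξ = 0)
    (hωcp : ∀ ξ₁ ξ₂ : ℝ, R ≤ ξ₁ → R ≤ ξ₂ → ω ξ₁ = ω ξ₂)
    (hωcm : ∀ ξ₁ ξ₂ : ℝ, ξ₁ ≤ -R → ξ₂ ≤ -R → ω ξ₁ = ω ξ₂)
    (ψ : ℝ → ℝ) (hψ : ContDiff ℝ (⊤ : ℕ∞) ψ) (hψc : HasCompactSupport ψ)
    (hψ01 : ∀ y : ℝ, 0 ≤ ψ y ∧ ψ y ≤ 1)
    (hψ1 : ∀ y : ℝ, |y| ≤ 1 / 2 → ψ y = 1)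
    (hψ0 : ∀ y : ℝ, 1 ≤ |y| → ψ y = 0) :
    ∀ α β : ℕ, ∃ C > 0, ∀ M h : ℝ, 0 < M → 1 ≤ h →
      (∀ x ξ : ℝ,
        |iteratedDeriv α
            (fun ξ' => iteratedDeriv β
              (fun x' => M * ω (ξ' / h) * jbh h ξ' ^ (-(k : ℝ) + 1) *
                ∫ y in (0:ℝ)..x',
                  jb y ^ (-(((p : ℝ) - k) / ((p : ℝ) - 1))) *
                    ψ (jb y / jbh h ξ' ^ ((p : ℝ) - 1))) x) ξ| ≤
          C * M * jb x ^ (-(β : ℝ)) * jbh h ξ ^ (-(α : ℝ))) ∧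
      (1 ≤ β → ∀ x ξ : ℝ,
        |iteratedDeriv α
            (fun ξ' => iteratedDeriv β
              (fun x' => M * ω (ξ' / h) * jbh h ξ' ^ (-(k : ℝ) + 1) *
                ∫ y in (0:ℝ)..x',
                  jb y ^ (-(((p : ℝ) - k) / ((p : ℝ) - 1))) *
                    ψ (jb y / jbh h ξ' ^ ((p : ℝ) - 1))) x) ξ| ≤
          C * M * jb x ^ (((k : ℝ) - 1) / ((p : ℝ) - 1) - β) *
            jbh h ξ ^ (-(α : ℝ) - (k : ℝ) + 1) *
            Set.indicator {x' : ℝ | jb x' ≤ jbh h ξ ^ ((p : ℝ) - 1)}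
              (fun _ => (1:ℝ)) x) := by
  intro α β
  have hp3 : 3 ≤ p := by omega
  have hpR : (3 : ℝ) ≤ p := by exact_mod_cast hp3
  have hk2R : (2 : ℝ) ≤ k := by exact_mod_cast hk2
  have hkR : (k : ℝ) + 1 ≤ p := by exact_mod_cast (by omega : k + 1 ≤ p)
  set q : ℝ := (p : ℝ) - 1 with hq
  set δ : ℝ := ((k : ℝ) - 1) / q with hδdef
  have hq0 : 0 < q := by linarith
  have hδ : 0 < δ := div_pos (by linarith) hq0
  have hδ1 : δ ≤ 1 := by rw [hδdef, div_le_one hq0]; linarith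
  have hexp : -(((p : ℝ) - k) / q) = δ - 1 := by
    rw [hδdef]; field_simp; rw [hq]; ring
  have hqδ : q * δ = (k : ℝ) - 1 := by rw [hδdef]; field_simp
  have hψ' : IsCutoff ψ := ⟨hψ, fun t ht => hψ0 t ht.le⟩
  have hω' : HasCompactSupport (deriv ω) :=
    hasCompactSupport_deriv_of_eventually_const hωcp hωcm
  rw [hexp]
  have hM (M h x ξ : ℝ) :
      iteratedDeriv α (fun ξ' => iteratedDeriv β (fun x' =>
        M * ω (ξ' / h) * jbh h ξ' ^ (-(k : ℝ) + 1) *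
          ∫ y in (0 : ℝ)..x', jb y ^ (δ - 1) * ψ (jb y / jbh h ξ' ^ q)) x) ξ =
      M * iteratedDeriv α (fun ξ' => ω (ξ' / h) * jbh h ξ' ^ (-(k : ℝ) + 1) *
        iteratedDeriv β (fun x' =>
          ∫ y in (0 : ℝ)..x', jb y ^ (δ - 1) * ψ (jb y / jbh h ξ' ^ q)) x) ξ := by
    simp only [iteratedDeriv_const_mul_field, mul_assoc]
  simp only [hM, abs_mul]
  cases β with
  | zero =>
    obtain ⟨C, hC⟩ := exists_abs_iteratedDeriv_comp_le hω ⟨1, hωb⟩ hω' q (-(k : ℝ) + 1)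
      (J := fun j x W => ∫ y in (0 : ℝ)..x, jb y ^ (δ - 1) * eulerOp^[j] ψ (jb y / W))
      (B := fun _ W => W ^ δ) (fun j x W hW => by
        simp only [Function.iterate_succ_apply']
        exact (hψ'.iterate j).hasDerivAt_integral (δ - 1) x hW) (fun j => by
        obtain ⟨C, hC⟩ := (hψ'.iterate j).exists_abs_integral_le hδ hδ1
        exact ⟨C, fun x W hW => hC W hW x⟩) α
    refine ⟨|C| + 1, by positivity, fun M h hM0 hh => ⟨fun x ξ => ?_, by simp⟩⟩
    have hpos := jbh_pos hh ξ
    have h1 := hC h hh x ξ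
    rw [← Real.rpow_mul hpos.le, hqδ, ← Real.rpow_add hpos,
      show -(k : ℝ) + 1 + (k - 1) = 0 by ring, Real.rpow_zero, one_div] at h1
    simp only [Function.iterate_zero, id_eq] at h1
    simp only [iteratedDeriv_zero, Nat.cast_zero, neg_zero, Real.rpow_zero, mul_one]
    rw [abs_of_pos hM0, Real.rpow_neg hpos.le, Real.rpow_natCast, mul_comm _ M, mul_assoc]
    refine mul_le_mul_of_nonneg_left (h1.trans ?_) hM0.le
    exact mul_le_mul_of_nonneg_right (by linarith [le_abs_self C]) (by positivity)
  | succ b =>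
    obtain ⟨C, hC⟩ := exists_abs_iteratedDeriv_comp_le hω ⟨1, hωb⟩ hω' q (-(k : ℝ) + 1)
      (J := fun j x W => iteratedDeriv b
        (fun x => jb x ^ (δ - 1) * eulerOp^[j] ψ (jb x / W)) x)
      (B := fun x W => jb x ^ (δ - 1) / jb x ^ b * Set.indicator {x | jb x ≤ W} (fun _ => 1) x)
      (fun j x W hW => by
        simp only [Function.iterate_succ_apply']
        exact (hψ'.iterate j).hasDerivAt_iteratedDeriv
          (contDiff_jb.rpow_const_of_ne fun x => (jb_pos x).ne') b x hW) (fun j => by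
        obtain ⟨C, hC⟩ := (hψ'.iterate j).exists_abs_iteratedDeriv_le (δ - 1) b
        exact ⟨C, fun x W hW => hC W hW x⟩) α
    have hint (h x ξ : ℝ) : iteratedDeriv (b + 1) (fun x' =>
        ∫ y in (0 : ℝ)..x', jb y ^ (δ - 1) * ψ (jb y / jbh h ξ ^ q)) x =
        iteratedDeriv b (fun x => jb x ^ (δ - 1) * ψ (jb x / jbh h ξ ^ q)) x := by
      rw [iteratedDeriv_succ']
      congr 1
      funext y
      exact (hψ'.continuous_rpow_mul _ _).deriv_integral _ 0 y
    simp only [hint]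
    have hrefined (M h : ℝ) (hM0 : 0 < M) (hh : 1 ≤ h) (x ξ : ℝ) :
        |M| * |iteratedDeriv α (fun ξ' => ω (ξ' / h) * jbh h ξ' ^ (-(k : ℝ) + 1) *
          iteratedDeriv b (fun x => jb x ^ (δ - 1) * ψ (jb x / jbh h ξ' ^ q)) x) ξ| ≤
        (|C| + 1) * M * jb x ^ (δ - (b + 1 : ℕ)) * jbh h ξ ^ (-(α : ℝ) - k + 1) *
          Set.indicator {x' : ℝ | jb x' ≤ jbh h ξ ^ q} (fun _ => (1 : ℝ)) x := by
      have hpos := jbh_pos hh ξ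
      have hj := jb_pos x
      have h1 := hC h hh x ξ
      simp only [Function.iterate_zero, id_eq] at h1
      have e1 : jb x ^ (δ - (b + 1 : ℕ)) = jb x ^ (δ - 1) / jb x ^ b := by
        rw [← Real.rpow_natCast, ← Real.rpow_sub hj]
        congr 1
        push_cast
        ring
      have e2 : jbh h ξ ^ (-(α : ℝ) - k + 1) = jbh h ξ ^ (-(k : ℝ) + 1) / jbh h ξ ^ α := by
        rw [← Real.rpow_natCast, ← Real.rpow_sub hpos]
        congr 1
        ring
      have hI : (0 : ℝ) ≤ Set.indicator {x' : ℝ | jb x' ≤ jbh h ξ ^ q} (fun _ => (1 : ℝ)) x :=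
        Set.indicator_nonneg (fun _ _ => zero_le_one) x
      rw [abs_of_pos hM0, e1, e2]
      refine (mul_le_mul_of_nonneg_left (h1.trans (mul_le_mul_of_nonneg_right
        (by linarith [le_abs_self C] : C ≤ |C| + 1) (by positivity))) hM0.le).trans_eq ?_
      ring
    refine ⟨|C| + 1, by positivity, fun M h hM0 hh =>
      ⟨fun x ξ => (hrefined M h hM0 hh x ξ).trans ?_, fun _ x ξ => hrefined M h hM0 hh x ξ⟩⟩
    have hpos := jbh_pos hh ξ
    have hj := jb_pos x
    by_cases hx : x ∈ {x' : ℝ | jb x' ≤ jbh h ξ ^ q}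
    · have h1 : jb x ^ δ ≤ jbh h ξ ^ ((k : ℝ) - 1) := by
        rw [← hqδ, Real.rpow_mul hpos.le]
        exact Real.rpow_le_rpow hj.le hx hδ.le
      rw [Set.indicator_of_mem hx, mul_one, sub_eq_add_neg δ, Real.rpow_add hj]
      calc _ = jb x ^ δ * ((|C| + 1) * M * jb x ^ (-((b + 1 : ℕ) : ℝ)) *
            jbh h ξ ^ (-(α : ℝ) - k + 1)) := by ring
        _ ≤ jbh h ξ ^ ((k : ℝ) - 1) * ((|C| + 1) * M * jb x ^ (-((b + 1 : ℕ) : ℝ)) *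
            jbh h ξ ^ (-(α : ℝ) - k + 1)) :=
            mul_le_mul_of_nonneg_right h1 (by positivity)
        _ = (|C| + 1) * M * jb x ^ (-((b + 1 : ℕ) : ℝ)) *
            (jbh h ξ ^ ((k : ℝ) - 1) * jbh h ξ ^ (-(α : ℝ) - k + 1)) := by ring
        _ = _ := by
            rw [← Real.rpow_add hpos]
            congr 2
            ring
    · rw [Set.indicator_of_notMem hx, mul_zero]
      positivity
end
end

section
/- Let p ≥ 2 and 2 ≤ k ≤ p−1 be integers, M > 0, h ≥ 1, R > 1; let ω ∈ C^∞(ℝ) satisfy |ω(ξ)| ≤ 1 for all ξ, ω(ξ) = 0 for |ξ| ≤ 1, and ω constant on each of {ξ ≥ R} and {ξ ≤ −R}; let ψ ∈ C₀^∞(ℝ) with 0 ≤ ψ ≤ 1, ψ(y) = 1 for |y| ≤ 1/2 and ψ(y) = 0 for |y| ≥ 1. Define λ_{p−k}(x,ξ) := M·ω(ξ/h)·⟨ξ⟩_h^{−k+1}·∫₀ˣ ⟨y⟩^{−(p−k)/(p−1)} ψ(⟨y⟩/⟨ξ⟩_h^{p−1}) dy. Then for all α, β ∈ ℕ there exists C_{α,β,k}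 > 0 (depending also on M, R, ω, ψ but not on h, x, ξ) such that, for either choice of sign, |∂_ξ^α ∂_x^β e^{±λ_{p−k}(x,ξ)}| ≤ C_{α,β,k}·⟨x⟩^{−β}·⟨ξ⟩_h^{−α}·e^{±λ_{p−k}(x,ξ)} for all x, ξ ∈ ℝ. -/
open MeasureTheory Real

noncomputable section

/-- Families of functions of `(x, ξ)` indexed by a parameter `h ≥ 1`. -/
abbrev SymbolFamily := {h : ℝ // 1 ≤ h} → ℝ → ℝ → ℝ

namespace SymbolFamily

/-- `f` is bounded by a multiple of `g`, uniformly in all variables. -/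
def Bounded (g f : SymbolFamily) : Prop := ∃ C : ℝ, ∀ h x ξ, |f h x ξ| ≤ C * g h x ξ

/-- `f'` is the derivative of `f` in the variable `x`. -/
def DerivX (f f' : SymbolFamily) : Prop :=
  ∀ h x ξ, HasDerivAt (fun t => f h t ξ) (f' h x ξ) x

/-- `f'` is the derivative of `f` in the variable `ξ`. -/
def DerivXi (f f' : SymbolFamily) : Prop :=
  ∀ h x ξ, HasDerivAt (fun t => f h x t) (f' h x ξ) ξ

/-- `f` has `n` successive `D`-derivatives, the `j`-th of which is of size `g * v ^ j`, where `O`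
says what it means to be of a given size. -/
def Symb (D O : SymbolFamily → SymbolFamily → Prop) (v : SymbolFamily) :
    ℕ → SymbolFamily → SymbolFamily → Prop
  | 0, g, f => O g f
  | n + 1, g, f => O g f ∧ ∃ df, D f df ∧ Symb D O v n (g * v) df

/-- The constant family. -/
def const (c : ℝ) : SymbolFamily := fun _ _ _ => c

/-- The rules of calculus for a derivation `D` and a size relation `O`. -/
structure Calculus (D O : SymbolFamily → SymbolFamily → Prop) : Prop where
  deriv_add : ∀ {f f' g g'}, D f f' → D g g' → D (f + g) (f' + g')
  deriv_mul : ∀ {f f' g g'}, D f f' → D g g' → D (f * g) (f' * g + f * g')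
  deriv_const : ∀ c, D (const c) 0
  size_add : ∀ {g f₁ f₂}, O g f₁ → O g f₂ → O g (f₁ + f₂)
  size_mul : ∀ {g₁ g₂ f₁ f₂}, O g₁ f₁ → O g₂ f₂ → O (g₁ * g₂) (f₁ * f₂)
  size_const : ∀ c, O 1 (const c)
  size_zero : ∀ g, O g 0

section Generic

variable {D O : SymbolFamily → SymbolFamily → Prop} {v : SymbolFamily}

lemma Symb.size : ∀ {n : ℕ} {g f : SymbolFamily}, Symb D O v n g f → O g f
  | 0, _, _, h => h
  | _ + 1, _, _, h => h.1

lemma Symb.of_succ : ∀ {n : ℕ} {g f : SymbolFamily},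
    Symb D O v (n + 1) g f → Symb D O v n g f
  | 0, _, _, h => h.1
  | _ + 1, _, _, ⟨h, f', hf', hs⟩ => ⟨h, f', hf', hs.of_succ⟩

lemma Symb.add (hc : Calculus D O) : ∀ {n : ℕ} {g f₁ f₂ : SymbolFamily},
    Symb D O v n g f₁ → Symb D O v n g f₂ → Symb D O v n g (f₁ + f₂)
  | 0, _, _, _, h₁, h₂ => hc.size_add h₁ h₂
  | _ + 1, _, _, _, ⟨h₁, f₁', d₁, s₁⟩, ⟨h₂, f₂', d₂, s₂⟩ =>
    ⟨hc.size_add h₁ h₂, f₁' + f₂', hc.deriv_add d₁ d₂, s₁.add hc s₂⟩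

lemma Symb.mul (hc : Calculus D O) {n : ℕ} {g₁ g₂ f₁ f₂ : SymbolFamily}
    (h₁ : Symb D O v n g₁ f₁) (h₂ : Symb D O v n g₂ f₂) :
    Symb D O v n (g₁ * g₂) (f₁ * f₂) := by
  induction n generalizing g₁ g₂ f₁ f₂ with
  | zero => exact hc.size_mul h₁ h₂
  | succ n ih =>
    have k₁ := h₁.of_succ
    have k₂ := h₂.of_succ
    obtain ⟨o₁, f₁', d₁, s₁⟩ := h₁
    obtain ⟨o₂, f₂', d₂, s₂⟩ := h₂
    refine ⟨hc.size_mul o₁ o₂, _, hc.deriv_mul d₁ d₂, Symb.add hc ?_ ?_⟩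
    · convert ih s₁ k₂ using 1; ring
    · convert ih k₁ s₂ using 1; ring

lemma Symb.zero (hc : Calculus D O) (n : ℕ) (g : SymbolFamily) : Symb D O v n g 0 := by
  induction n generalizing g with
  | zero => exact hc.size_zero g
  | succ n ih => exact ⟨hc.size_zero g, 0, hc.deriv_const 0, ih _⟩

lemma Symb.of_deriv_zero (hc : Calculus D O) {g f : SymbolFamily} (hO : O g f) (hD : D f 0)
    (n : ℕ) : Symb D O v n g f := by
  cases n with
  | zero => exact hO
  | succ n => exact ⟨hO, 0, hD, Symb.zero hc n _⟩

lemma Symb.const_mul (hc : Calculus D O) {n : ℕ} {g f : SymbolFamily} (c : ℝ)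
    (hf : Symb D O v n g f) : Symb D O v n g (const c * f) := by
  simpa using (Symb.of_deriv_zero hc (hc.size_const c) (hc.deriv_const c) n).mul hc hf

/-- A collection of families of size `g`, each of whose derivatives is the product of a member of
the collection and a symbol of size `v`, consists of symbols. -/
lemma Symb.of_deriv_eq_mul (hc : Calculus D O) {Φ : Type*} {g b : SymbolFamily}
    (T : Φ → SymbolFamily) (next : Φ → Φ) (hb : ∀ n, Symb D O v n v b)
    (hD : ∀ φ, D (T φ) (T (next φ) * b)) (hO : ∀ φ, O g (T φ)) (n : ℕ) (φ : Φ) :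
    Symb D O v n g (T φ) := by
  induction n generalizing φ with
  | zero => exact hO φ
  | succ n ih => exact ⟨hO φ, _, hD φ, (ih _).mul hc (hb n)⟩

lemma Symb.pair (hc : Calculus D O) {a b : SymbolFamily} (ha : O v a) (hb : O v b)
    (da : D a (const (-2) * (a * b))) (db : D b (a * a + const (-1) * (b * b))) (n : ℕ) :
    Symb D O v n v a ∧ Symb D O v n v b := by
  induction n with
  | zero => exact ⟨ha, hb⟩
  | succ n ih =>
    obtain ⟨sa, sb⟩ := ih
    exact ⟨⟨ha, _, da, (sa.mul hc sb).const_mul hc _⟩,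
      ⟨hb, _, db, (sa.mul hc sa).add hc ((sb.mul hc sb).const_mul hc _)⟩⟩

end Generic

lemma calculus_xi : Calculus DerivXi Bounded where
  deriv_add hf hg h x ξ := (hf h x ξ).add (hg h x ξ)
  deriv_mul hf hg h x ξ := (hf h x ξ).mul (hg h x ξ)
  deriv_const c _ _ ξ := hasDerivAt_const ξ c
  size_add := by
    rintro g f₁ f₂ ⟨C₁, h₁⟩ ⟨C₂, h₂⟩
    refine ⟨C₁ + C₂, fun h x ξ => (abs_add_le _ _).trans ?_⟩
    rw [add_mul]
    exact add_le_add (h₁ h x ξ) (h₂ h x ξ)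
  size_mul := by
    rintro g₁ g₂ f₁ f₂ ⟨C₁, h₁⟩ ⟨C₂, h₂⟩
    refine ⟨C₁ * C₂, fun h x ξ => ?_⟩
    have h₁' := h₁ h x ξ
    have e : C₁ * C₂ * (g₁ * g₂) h x ξ = (C₁ * g₁ h x ξ) * (C₂ * g₂ h x ξ) := by
      simp only [Pi.mul_apply]; ring
    rw [e]
    simp only [Pi.mul_apply, abs_mul]
    exact mul_le_mul h₁' (h₂ h x ξ) (abs_nonneg _) ((abs_nonneg _).trans h₁')
  size_const c := ⟨|c|, fun h x ξ => by simp [const]⟩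
  size_zero g := ⟨0, fun h x ξ => by simp⟩

/-- The weight `⟨ξ⟩ₕ⁻¹` gained by a derivative in `ξ`. -/
def gainXi : SymbolFamily := fun h _ ξ => (jbh h ξ)⁻¹

/-- The weight `⟨x⟩⁻¹` gained by a derivative in `x`. -/
def gainX : SymbolFamily := fun _ x _ => (jb x)⁻¹

/-- Symbols in the variable `ξ`. -/
def SymbXi (g f : SymbolFamily) : Prop := ∀ n, Symb DerivXi Bounded gainXi n g f

/-- Symbols in both variables, with `n` derivatives in `x`. -/
abbrev SymbX (n : ℕ) (g f : SymbolFamily) : Prop := Symb DerivX SymbXi gainX n g f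

lemma SymbXi.mul {g₁ g₂ f₁ f₂ : SymbolFamily} (h₁ : SymbXi g₁ f₁) (h₂ : SymbXi g₂ f₂) :
    SymbXi (g₁ * g₂) (f₁ * f₂) := fun n => (h₁ n).mul calculus_xi (h₂ n)

lemma calculus_x : Calculus DerivX SymbXi where
  deriv_add hf hg h x ξ := (hf h x ξ).add (hg h x ξ)
  deriv_mul hf hg h x ξ := (hf h x ξ).mul (hg h x ξ)
  deriv_const c _ x _ := hasDerivAt_const x c
  size_add h₁ h₂ n := (h₁ n).add calculus_xi (h₂ n)
  size_mul := SymbXi.mul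
  size_const c :=
    Symb.of_deriv_zero calculus_xi (calculus_xi.size_const c) (calculus_xi.deriv_const c)
  size_zero g n := Symb.zero calculus_xi n g

lemma SymbX.exists_iteratedDeriv {n : ℕ} {g f : SymbolFamily} (hf : SymbX n g f) :
    ∃ f', SymbXi (g * gainX ^ n) f' ∧
      ∀ h x ξ, iteratedDeriv n (fun t => f h t ξ) x = f' h x ξ := by
  induction n generalizing g f with
  | zero => exact ⟨f, by simpa using hf.size, fun h x ξ => by simp⟩
  | succ n ih =>
    obtain ⟨-, f', hd, hs⟩ := hf
    obtain ⟨f'', hs', he⟩ := ih hs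
    refine ⟨f'', by rwa [pow_succ', ← mul_assoc], fun h x ξ => ?_⟩
    have : deriv (fun t => f h t ξ) = fun t => f' h t ξ := funext fun t => (hd h t ξ).deriv
    rw [iteratedDeriv_succ', this, he]

lemma exists_bound_iteratedDeriv {n : ℕ} {g f : SymbolFamily}
    (hf : Symb DerivXi Bounded gainXi n g f) :
    ∃ C : ℝ, ∀ h x ξ, |iteratedDeriv n (fun t => f h x t) ξ| ≤ C * (g * gainXi ^ n) h x ξ := by
  induction n generalizing g f with
  | zero =>
    obtain ⟨C, hC⟩ := hf.size
    exact ⟨C, fun h x ξ => by simpa using hC h x ξ⟩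
  | succ n ih =>
    obtain ⟨-, f', hd, hs⟩ := hf
    obtain ⟨C, hC⟩ := ih hs
    refine ⟨C, fun h x ξ => ?_⟩
    have : deriv (fun t => f h x t) = fun t => f' h x t := funext fun t => (hd h x t).deriv
    rw [iteratedDeriv_succ', this, pow_succ', ← mul_assoc]
    exact hC h x ξ

/-! ### Brackets -/

lemma jbh_pos {h : ℝ} (hh : 1 ≤ h) (ξ : ℝ) : 0 < jbh h ξ :=
  Real.sqrt_pos.2 (by positivity)

lemma one_le_jbh {h : ℝ} (hh : 1 ≤ h) (ξ : ℝ) : 1 ≤ jbh h ξ :=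
  Real.one_le_sqrt.2 (by nlinarith [sq_nonneg ξ])

lemma jbh_sq (h ξ : ℝ) : jbh h ξ ^ 2 = h ^ 2 + ξ ^ 2 := Real.sq_sqrt (by positivity)

lemma jb_eq (x : ℝ) : jb x = jbh 1 x := by simp [jb, jbh]

lemma one_le_jb (x : ℝ) : 1 ≤ jb x := jb_eq x ▸ one_le_jbh le_rfl x

lemma jb_pos (x : ℝ) : 0 < jb x := jb_eq x ▸ jbh_pos le_rfl x

lemma abs_le_jbh (h ξ : ℝ) : |ξ| ≤ jbh h ξ := Real.abs_le_sqrt (by nlinarith [sq_nonneg h])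

lemma abs_le_jbh_left (h ξ : ℝ) : |h| ≤ jbh h ξ := Real.abs_le_sqrt (by nlinarith [sq_nonneg ξ])

lemma abs_div_jbh_sq_le {h : ℝ} (hh : 1 ≤ h) {ξ c : ℝ} (hc : |c| ≤ jbh h ξ) :
    |c / jbh h ξ ^ 2| ≤ 1 * (jbh h ξ)⁻¹ := by
  have hw := jbh_pos hh ξ
  rw [abs_div, abs_of_pos (pow_pos hw 2), div_le_iff₀ (pow_pos hw 2)]
  have : 1 * (jbh h ξ)⁻¹ * jbh h ξ ^ 2 = jbh h ξ := by field_simp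
  rwa [this]

lemma hasDerivAt_jbh {h : ℝ} (hh : 1 ≤ h) (ξ : ℝ) :
    HasDerivAt (jbh h) (jbh h ξ * (ξ / jbh h ξ ^ 2)) ξ := by
  have hw := jbh_pos hh ξ
  have h1 : HasDerivAt (fun t : ℝ => h ^ 2 + t ^ 2) (2 * ξ) ξ := by
    simpa using (hasDerivAt_pow 2 ξ).const_add (h ^ 2)
  have h2 := h1.sqrt (by positivity)
  have e : jbh h ξ * (ξ / jbh h ξ ^ 2) = 2 * ξ / (2 * √(h ^ 2 + ξ ^ 2)) := by
    change jbh h ξ * (ξ / jbh h ξ ^ 2) = 2 * ξ / (2 * jbh h ξ)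
    field_simp
  rw [e]
  exact h2

lemma hasDerivAt_jbh_rpow {h : ℝ} (hh : 1 ≤ h) (m ξ : ℝ) :
    HasDerivAt (fun t => jbh h t ^ m) (jbh h ξ ^ m * (m * (ξ / jbh h ξ ^ 2))) ξ := by
  have hw := jbh_pos hh ξ
  refine ((hasDerivAt_jbh hh ξ).rpow_const (p := m) (Or.inl hw.ne')).congr_deriv ?_
  rw [Real.rpow_sub_one hw.ne']
  field_simp

lemma hasDerivAt_div_jbh_sq {h : ℝ} (hh : 1 ≤ h) (ξ : ℝ) :
    HasDerivAt (fun t => h / jbh h t ^ 2)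
      (-2 * (h / jbh h ξ ^ 2 * (ξ / jbh h ξ ^ 2))) ξ := by
  have hw := jbh_pos hh ξ
  refine ((((hasDerivAt_jbh hh ξ).fun_pow 2).fun_inv
    (by positivity)).const_mul h).congr_deriv ?_
  simp only [Nat.cast_ofNat, Nat.add_one_sub_one, pow_one]
  field_simp

lemma hasDerivAt_id_div_jbh_sq {h : ℝ} (hh : 1 ≤ h) (ξ : ℝ) :
    HasDerivAt (fun t => t / jbh h t ^ 2)
      (h / jbh h ξ ^ 2 * (h / jbh h ξ ^ 2) +
        -1 * (ξ / jbh h ξ ^ 2 * (ξ / jbh h ξ ^ 2))) ξ := by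
  have hw := jbh_pos hh ξ
  refine ((hasDerivAt_id ξ).fun_div ((hasDerivAt_jbh hh ξ).fun_pow 2)
    (by positivity)).congr_deriv ?_
  have hs := jbh_sq h ξ
  simp only [id, Nat.cast_ofNat, Nat.add_one_sub_one, pow_one]
  field_simp
  linear_combination hs

/-! ### Elementary symbols -/

/-- `ξ / ⟨ξ⟩ₕ²`, the logarithmic derivative of `⟨ξ⟩ₕ`. -/
def logDerivXi : SymbolFamily := fun h _ ξ => ξ / jbh h ξ ^ 2

/-- `x / ⟨x⟩²`, the logarithmic derivative of `⟨x⟩`. -/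
def logDerivX : SymbolFamily := fun _ x _ => x / jb x ^ 2

lemma symbXi_pair :
    SymbXi gainXi (fun h _ ξ => h / jbh h ξ ^ 2) ∧ SymbXi gainXi logDerivXi := by
  have key := Symb.pair (v := gainXi) (a := fun h _ ξ => h / jbh h ξ ^ 2) (b := logDerivXi)
    calculus_xi
    ⟨1, fun h x ξ => abs_div_jbh_sq_le h.2 (abs_le_jbh_left _ _)⟩
    ⟨1, fun h x ξ => abs_div_jbh_sq_le h.2 (abs_le_jbh _ _)⟩
    (fun h x ξ => hasDerivAt_div_jbh_sq h.2 ξ) (fun h x ξ => hasDerivAt_id_div_jbh_sq h.2 ξ)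
  exact ⟨fun n => (key n).1, fun n => (key n).2⟩

lemma symbXi_of_bounded {g f : SymbolFamily} (hf : Bounded g f)
    (hc : ∀ h x ξ ξ', f h x ξ = f h x ξ') : SymbXi g f := by
  refine Symb.of_deriv_zero calculus_xi hf fun h x ξ => ?_
  have : (fun t => f h x t) = fun _ => f h x ξ := funext fun t => hc h x t ξ
  rw [this]
  exact hasDerivAt_const _ _

lemma symbX_of_symbXi {g f : SymbolFamily} (hf : SymbXi g f)
    (hc : ∀ h x x' ξ, f h x ξ = f h x' ξ) (n : ℕ) : SymbX n g f := by
  refine Symb.of_deriv_zero calculus_x hf (fun h x ξ => ?_) n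
  have : (fun t => f h t ξ) = fun _ => f h x ξ := funext fun t => hc h t x ξ
  rw [this]
  exact hasDerivAt_const _ _

lemma symbX_logDerivX (n : ℕ) : SymbX n gainX logDerivX := by
  refine (Symb.pair (v := gainX) (a := fun _ x _ => 1 / jb x ^ 2) (b := logDerivX)
    calculus_x ?_ ?_ ?_ ?_ n).2
  · refine symbXi_of_bounded ⟨1, fun h x ξ => ?_⟩ fun _ _ _ _ => rfl
    simp only [jb_eq, gainX]
    exact abs_div_jbh_sq_le le_rfl (abs_le_jbh_left _ _)
  · refine symbXi_of_bounded ⟨1, fun h x ξ => ?_⟩ fun _ _ _ _ => rfl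
    simp only [jb_eq, gainX, logDerivX]
    exact abs_div_jbh_sq_le le_rfl (abs_le_jbh _ _)
  · intro h x ξ
    simp only [jb_eq, logDerivX, Pi.mul_apply, const]
    exact hasDerivAt_div_jbh_sq le_rfl x
  · intro h x ξ
    simp only [jb_eq, logDerivX, Pi.mul_apply, Pi.add_apply, const]
    exact hasDerivAt_id_div_jbh_sq le_rfl x

/-- `⟨ξ⟩ₕ^m`. -/
def powXi (m : ℝ) : SymbolFamily := fun h _ ξ => jbh h ξ ^ m

/-- `⟨x⟩^m`. -/
def powX (m : ℝ) : SymbolFamily := fun _ x _ => jb x ^ m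

lemma symbXi_powXi (m : ℝ) : SymbXi (powXi m) (powXi m) := fun n =>
  Symb.of_deriv_eq_mul calculus_xi (fun _ : Unit => powXi m) id
    (fun n => (symbXi_pair.2 n).const_mul calculus_xi m)
    (fun _ h _ ξ => hasDerivAt_jbh_rpow h.2 m ξ)
    (fun _ => ⟨1, fun h _ ξ => by
      rw [one_mul]; exact (abs_of_nonneg (Real.rpow_nonneg (jbh_pos h.2 ξ).le m)).le⟩) n ()

lemma symbX_powX (m : ℝ) (n : ℕ) : SymbX n (powX m) (powX m) :=
  Symb.of_deriv_eq_mul calculus_x (fun _ : Unit => powX m) id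
    (fun n => (symbX_logDerivX n).const_mul calculus_x m)
    (fun _ h x ξ => by
      simp only [powX, logDerivX, jb_eq, const, Pi.mul_apply]
      exact hasDerivAt_jbh_rpow le_rfl m x)
    (fun _ => symbXi_of_bounded ⟨1, fun h x ξ => by
      rw [one_mul]; exact (abs_of_nonneg (Real.rpow_nonneg (jb_pos x).le m)).le⟩
      fun _ _ _ _ => rfl) n ()

/-! ### Cut-offs -/

lemma exists_abs_le_of_eq_zero {φ : ℝ → ℝ} (hφ : Continuous φ) {R : ℝ}
    (h0 : ∀ t, R < |t| → φ t = 0) : ∃ C, 0 ≤ C ∧ ∀ t, |φ t| ≤ C := by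
  obtain ⟨C, hC⟩ := (isCompact_Icc (a := -R) (b := R)).exists_bound_of_continuousOn
    hφ.continuousOn
  refine ⟨max C 0, le_max_right _ _, fun t => ?_⟩
  by_cases ht : R < |t|
  · simp [h0 t ht]
  · exact (hC t (abs_le.1 (not_lt.1 ht))).trans (le_max_left _ _)

lemma deriv_eq_zero_of_eq_zero {φ : ℝ → ℝ} {R : ℝ} (h0 : ∀ t, R < |t| → φ t = 0) (t : ℝ)
    (ht : R < |t|) : deriv φ t = 0 := by
  have : φ =ᶠ[nhds t] fun _ => (0 : ℝ) := by
    filter_upwards [(isOpen_lt continuous_const continuous_abs).mem_nhds ht] with s hs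
    exact h0 s hs
  rw [this.deriv_eq, deriv_const]

lemma contDiff_deriv {φ : ℝ → ℝ} (hφ : ContDiff ℝ (⊤ : ℕ∞) φ) :
    ContDiff ℝ (⊤ : ℕ∞) (deriv φ) :=
  (contDiff_infty_iff_deriv.1 hφ).2

/-- Bounded smooth functions with derivative vanishing outside `[-R, R]`. -/
structure Plateau (R : ℝ) where
  /-- the function -/
  toFun : ℝ → ℝ
  smooth : ContDiff ℝ (⊤ : ℕ∞) toFun
  bounded : ∃ C, ∀ t, |toFun t| ≤ C
  deriv_eq_zero : ∀ t, R < |t| → deriv toFun t = 0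

/-- `t ↦ (1 + t²) * deriv φ t`. -/
def Plateau.next {R : ℝ} (φ : Plateau R) : Plateau R where
  toFun t := (1 + t ^ 2) * deriv φ.toFun t
  smooth := (contDiff_const.add (contDiff_id.pow 2)).mul (contDiff_deriv φ.smooth)
  bounded := by
    have hc : Continuous fun t => (1 + t ^ 2) * deriv φ.toFun t :=
      (by fun_prop : Continuous fun t : ℝ => 1 + t ^ 2).mul (contDiff_deriv φ.smooth).continuous
    obtain ⟨C, -, hC⟩ := exists_abs_le_of_eq_zero (R := R) hc
      fun t ht => by rw [φ.deriv_eq_zero t ht, mul_zero]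
    exact ⟨C, hC⟩
  deriv_eq_zero := deriv_eq_zero_of_eq_zero fun t ht => by rw [φ.deriv_eq_zero t ht, mul_zero]

/-- `φ(ξ / h)`. -/
def plateau {R : ℝ} (φ : Plateau R) : SymbolFamily := fun h _ ξ => φ.toFun (ξ / h)

lemma symbXi_plateau {R : ℝ} (φ : Plateau R) :
    SymbXi 1 (plateau φ) := fun n => by
  refine Symb.of_deriv_eq_mul calculus_xi
    plateau Plateau.next symbXi_pair.1 ?_ ?_ n φ
  · intro φ h x ξ
    have hh : (h : ℝ) ≠ 0 := (one_pos.trans_le h.2).ne'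
    have hφ : HasDerivAt φ.toFun (deriv φ.toFun (ξ / h)) (ξ / h) :=
      (φ.smooth.differentiable (by simp) _).hasDerivAt
    refine (hφ.comp ξ ((hasDerivAt_id ξ).div_const (h : ℝ))).congr_deriv ?_
    simp only [plateau, Plateau.next, Pi.mul_apply, jbh_sq]
    have : (h : ℝ) ^ 2 + ξ ^ 2 ≠ 0 := by positivity
    field_simp
  · intro φ
    obtain ⟨C, hC⟩ := φ.bounded
    exact ⟨C, fun h x ξ => by simpa [plateau] using hC _⟩

/-- Smooth functions vanishing outside `[-1, 1]`. -/
structure Cutoff where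
  /-- the function -/
  toFun : ℝ → ℝ
  smooth : ContDiff ℝ (⊤ : ℕ∞) toFun
  eq_zero : ∀ t, 1 < |t| → toFun t = 0

/-- `t ↦ t * deriv φ t`. -/
def Cutoff.next (φ : Cutoff) : Cutoff where
  toFun t := t * deriv φ.toFun t
  smooth := contDiff_id.mul (contDiff_deriv φ.smooth)
  eq_zero t ht := by rw [deriv_eq_zero_of_eq_zero φ.eq_zero t ht, mul_zero]

lemma Cutoff.exists_bound (φ : Cutoff) : ∃ C, 0 ≤ C ∧ ∀ t, |φ.toFun t| ≤ C :=
  exists_abs_le_of_eq_zero φ.smooth.continuous φ.eq_zero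

lemma Cutoff.hasDerivAt_comp (φ : Cutoff) {z : ℝ → ℝ} {b t : ℝ}
    (hz : HasDerivAt z (z t * b) t) :
    HasDerivAt (fun s => φ.toFun (z s)) (φ.next.toFun (z t) * b) t := by
  have hφ : HasDerivAt φ.toFun (deriv φ.toFun (z t)) (z t) :=
    (φ.smooth.differentiable (by simp) _).hasDerivAt
  refine (hφ.comp t hz).congr_deriv ?_
  simp only [Cutoff.next]
  ring

/-- `φ(⟨x⟩ / ⟨ξ⟩ₕ^κ)`. -/
def cutoff (κ : ℝ) (φ : Cutoff) : SymbolFamily := fun h x ξ => φ.toFun (jb x / jbh h ξ ^ κ)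

lemma hasDerivAt_ratio_xi {h : ℝ} (hh : 1 ≤ h) (κ x ξ : ℝ) :
    HasDerivAt (fun t => jb x / jbh h t ^ κ)
      (jb x / jbh h ξ ^ κ * (-κ * (ξ / jbh h ξ ^ 2))) ξ := by
  have hw := Real.rpow_pos_of_pos (jbh_pos hh ξ) κ
  refine ((hasDerivAt_const ξ (jb x)).fun_div
    (hasDerivAt_jbh_rpow hh κ ξ) hw.ne').congr_deriv ?_
  field_simp
  ring

lemma hasDerivAt_ratio_x {h : ℝ} (κ x ξ : ℝ) :
    HasDerivAt (fun t => jb t / jbh h ξ ^ κ) (jb x / jbh h ξ ^ κ * (x / jb x ^ 2)) x := by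
  simp only [jb_eq]
  refine ((hasDerivAt_jbh le_rfl x).div_const (jbh h ξ ^ κ)).congr_deriv ?_
  ring

lemma derivXi_cutoff (κ : ℝ) (φ : Cutoff) :
    DerivXi (cutoff κ φ) (cutoff κ φ.next * (const (-κ) * logDerivXi)) := fun h x ξ =>
  φ.hasDerivAt_comp (hasDerivAt_ratio_xi h.2 κ x ξ)

lemma bounded_cutoff (κ : ℝ) {r : ℝ} (hr : 0 ≤ r) (φ : Cutoff) :
    Bounded (powX (-r) * powXi (κ * r)) (cutoff κ φ) := by
  obtain ⟨C, hC0, hC⟩ := φ.exists_bound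
  refine ⟨C, fun h x ξ => ?_⟩
  have hL := Real.rpow_pos_of_pos (jbh_pos h.2 ξ) κ
  have e : (powX (-r) * powXi (κ * r)) h x ξ = (jbh h ξ ^ κ / jb x) ^ r := by
    simp only [powX, powXi, Pi.mul_apply]
    rw [Real.div_rpow hL.le (jb_pos x).le, Real.rpow_neg (jb_pos x).le,
      Real.rpow_mul (jbh_pos h.2 ξ).le]
    field_simp
  rw [e]
  by_cases hz : 1 < jb x / jbh h ξ ^ κ
  · rw [cutoff, φ.eq_zero _ (hz.trans_le (le_abs_self _)), abs_zero]
    exact mul_nonneg hC0 (Real.rpow_nonneg (div_nonneg hL.le (jb_pos x).le) _)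
  · have hz' : 1 ≤ jbh h ξ ^ κ / jb x := by
      rw [not_lt, div_le_one hL] at hz
      rwa [one_le_div (jb_pos x)]
    exact (hC _).trans (le_mul_of_one_le_right hC0 (Real.one_le_rpow hz' hr))

lemma symbX_cutoff (κ : ℝ) {r : ℝ} (hr : 0 ≤ r) (φ : Cutoff) (n : ℕ) :
    SymbX n (powX (-r) * powXi (κ * r)) (cutoff κ φ) :=
  Symb.of_deriv_eq_mul calculus_x (cutoff κ) Cutoff.next symbX_logDerivX
    (fun φ _ x ξ => φ.hasDerivAt_comp (hasDerivAt_ratio_x κ x ξ))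
    (fun φ n => Symb.of_deriv_eq_mul calculus_xi (cutoff κ) Cutoff.next
      (fun n => (symbXi_pair.2 n).const_mul calculus_xi (-κ)) (derivXi_cutoff κ)
      (bounded_cutoff κ hr) n φ) n φ

/-! ### The integral -/

/-- `∫₀ˣ ⟨y⟩^(-q) φ(⟨y⟩ / ⟨ξ⟩ₕ^κ) dy`. -/
def primitive (κ q : ℝ) (φ : Cutoff) : SymbolFamily := fun h x ξ =>
  ∫ y in (0 : ℝ)..x, jb y ^ (-q) * φ.toFun (jb y / jbh h ξ ^ κ)

lemma continuous_jb_rpow (m : ℝ) : Continuous fun y => jb y ^ m := by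
  have : Continuous jb := by unfold jb; fun_prop
  exact this.rpow_const fun y => Or.inl (jb_pos y).ne'

lemma continuous_integrand (q L : ℝ) (φ : Cutoff) :
    Continuous fun y => jb y ^ (-q) * φ.toFun (jb y / L) := by
  have h1 : Continuous jb := by unfold jb; fun_prop
  exact (continuous_jb_rpow _).mul (φ.smooth.continuous.comp (h1.div_const L))

lemma derivX_primitive (κ q : ℝ) (φ : Cutoff) :
    DerivX (primitive κ q φ) (powX (-q) * cutoff κ φ) := fun _ _ _ =>
  (continuous_integrand q _ φ).integral_hasStrictDerivAt _ _ |>.hasDerivAt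

lemma derivXi_primitive (κ : ℝ) {q : ℝ} (hq : 0 ≤ q) (φ : Cutoff) :
    DerivXi (primitive κ q φ) (primitive κ q φ.next * (const (-κ) * logDerivXi)) := by
  intro h x ξ
  obtain ⟨C, hC0, hC⟩ := φ.next.exists_bound
  have key := intervalIntegral.hasDerivAt_integral_of_dominated_loc_of_deriv_le
    (μ := volume) (a := 0) (b := x) (x₀ := ξ) (s := Set.univ) (bound := fun _ => C * |κ|)
    (F := fun t y => jb y ^ (-q) * φ.toFun (jb y / jbh h t ^ κ))
    (F' := fun t y => jb y ^ (-q) *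
      (φ.next.toFun (jb y / jbh h t ^ κ) * (-κ * (t / jbh h t ^ 2))))
    Filter.univ_mem
    (Filter.Eventually.of_forall fun t => (continuous_integrand q _ φ).aestronglyMeasurable)
    ((continuous_integrand q _ φ).intervalIntegrable _ _)
    (by
      simp only [← mul_assoc]
      simp only [mul_assoc _ (-κ)]
      exact ((continuous_integrand q _ φ.next).mul continuous_const).aestronglyMeasurable)
    (Filter.Eventually.of_forall fun y _ t _ => by
      have h1 : |jb y ^ (-q)| ≤ 1 := by
        rw [abs_of_nonneg (Real.rpow_nonneg (jb_pos y).le _)]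
        exact Real.rpow_le_one_of_one_le_of_nonpos (one_le_jb y) (neg_nonpos.2 hq)
      have h2 : |t / jbh h t ^ 2| ≤ 1 := (abs_div_jbh_sq_le h.2 (abs_le_jbh _ _)).trans <| by
        rw [one_mul]; exact inv_le_one_of_one_le₀ (one_le_jbh h.2 t)
      rw [Real.norm_eq_abs, abs_mul, abs_mul, abs_mul, abs_neg]
      calc _ ≤ 1 * (C * (|κ| * 1)) := by gcongr; exact hC _
        _ = C * |κ| := by ring)
    intervalIntegrable_const
    (Filter.Eventually.of_forall fun y _ t _ =>
      (φ.hasDerivAt_comp (hasDerivAt_ratio_xi h.2 κ y t)).const_mul _)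
  have e : (primitive κ q φ.next * (const (-κ) * logDerivXi)) h x ξ =
      ∫ y in (0 : ℝ)..x, jb y ^ (-q) *
        (φ.next.toFun (jb y / jbh h ξ ^ κ) * (-κ * (ξ / jbh h ξ ^ 2))) := by
    simp only [primitive, Pi.mul_apply, const, logDerivXi]
    rw [← intervalIntegral.integral_mul_const]
    simp only [mul_assoc]
  rw [e]
  exact key.2

lemma abs_integral_le_of_nonneg {q : ℝ} (hq : 0 ≤ q) (hq1 : q < 1) {φ : Cutoff} {C : ℝ}
    (hC0 : 0 ≤ C) (hC : ∀ t, |φ.toFun t| ≤ C) {L : ℝ} (hL : 0 < L) {x : ℝ} (hx : 0 ≤ x) :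
    |∫ y in (0 : ℝ)..x, jb y ^ (-q) * φ.toFun (jb y / L)| ≤ C / (1 - q) * L ^ (1 - q) := by
  have hq' : 0 < 1 - q := sub_pos.2 hq1
  have hlow : ∀ {u : ℝ}, 0 ≤ u → u ≤ L →
      |∫ y in (0 : ℝ)..u, jb y ^ (-q) * φ.toFun (jb y / L)| ≤ C / (1 - q) * L ^ (1 - q) := by
    intro u hu huL
    have hint : IntervalIntegrable (fun y : ℝ => C * y ^ (-q)) volume 0 u :=
      (intervalIntegral.intervalIntegrable_rpow' (by linarith)).const_mul C
    have h1 := intervalIntegral.norm_integral_le_of_norm_le hu (μ := volume)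
      (f := fun y => jb y ^ (-q) * φ.toFun (jb y / L)) (g := fun y => C * y ^ (-q))
      (Filter.Eventually.of_forall fun y hy => by
        rw [Real.norm_eq_abs, abs_mul, abs_of_nonneg (Real.rpow_nonneg (jb_pos y).le _), mul_comm]
        have : y ≤ jb y := (le_abs_self y).trans (jb_eq y ▸ abs_le_jbh 1 y)
        exact mul_le_mul (hC _) (Real.rpow_le_rpow_of_nonpos hy.1 this (neg_nonpos.2 hq))
          (Real.rpow_nonneg (jb_pos y).le _) hC0) hint
    rw [intervalIntegral.integral_const_mul, integral_rpow (Or.inl (by linarith)),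
      Real.zero_rpow (by linarith), sub_zero, neg_add_eq_sub] at h1
    refine h1.trans ?_
    rw [← mul_div_assoc, mul_div_right_comm]
    gcongr
  rcases le_total x L with hxL | hxL
  · exact hlow hx hxL
  · have hz : ∫ y in L..x, jb y ^ (-q) * φ.toFun (jb y / L) = 0 := by
      refine intervalIntegral.integral_zero_ae (Filter.Eventually.of_forall fun y hy => ?_)
      rw [Set.uIoc_of_le hxL] at hy
      have : y ≤ jb y := (le_abs_self y).trans (jb_eq y ▸ abs_le_jbh 1 y)
      have h1 : 1 < jb y / L := (one_lt_div hL).2 (hy.1.trans_le this)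
      rw [φ.eq_zero _ (h1.trans_le (le_abs_self _)), mul_zero]
    rw [← intervalIntegral.integral_add_adjacent_intervals (b := L)
      ((continuous_integrand q L φ).intervalIntegrable _ _)
      ((continuous_integrand q L φ).intervalIntegrable _ _), hz, add_zero]
    exact hlow hL.le le_rfl

lemma bounded_primitive (κ : ℝ) {q : ℝ} (hq : 0 ≤ q) (hq1 : q < 1) (φ : Cutoff) :
    Bounded (powXi (κ * (1 - q))) (primitive κ q φ) := by
  obtain ⟨C, hC0, hC⟩ := φ.exists_bound
  refine ⟨C / (1 - q), fun h x ξ => ?_⟩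
  have hw := jbh_pos h.2 ξ
  simp only [powXi, primitive]
  rw [Real.rpow_mul hw.le]
  have hL := Real.rpow_pos_of_pos hw κ
  rcases le_total 0 x with hx | hx
  · exact abs_integral_le_of_nonneg hq hq1 hC0 hC hL hx
  · have h1 := abs_integral_le_of_nonneg hq hq1 hC0 hC hL (neg_nonneg.2 hx)
    have h2 := intervalIntegral.integral_comp_neg (a := 0) (b := -x)
      (fun y => jb y ^ (-q) * φ.toFun (jb y / jbh h ξ ^ κ))
    have h3 : ∀ y, jb (-y) = jb y := fun y => by simp [jb]
    simp only [h3, neg_neg, neg_zero] at h2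
    rw [h2] at h1
    rwa [intervalIntegral.integral_symm, abs_neg]

lemma symbXi_primitive (κ : ℝ) {q : ℝ} (hq : 0 ≤ q) (hq1 : q < 1) (φ : Cutoff) :
    SymbXi (powXi (κ * (1 - q))) (primitive κ q φ) := fun n =>
  Symb.of_deriv_eq_mul calculus_xi (primitive κ q) Cutoff.next
    (fun n => (symbXi_pair.2 n).const_mul calculus_xi (-κ)) (derivXi_primitive κ hq)
    (bounded_primitive κ hq hq1) n φ

/-! ### Exponentials -/

/-- The pointwise exponential. -/
def exp (f : SymbolFamily) : SymbolFamily := fun h x ξ => Real.exp (f h x ξ)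

lemma symbXi_exp {f : SymbolFamily} (hf : SymbXi 1 f) : SymbXi (exp f) (exp f) := by
  have hb : Bounded (exp f) (exp f) :=
    ⟨1, fun h x ξ => by rw [one_mul]; exact (abs_of_pos (Real.exp_pos _)).le⟩
  intro n
  induction n with
  | zero => exact hb
  | succ n ih =>
    obtain ⟨-, f', hd, hs⟩ := hf (n + 1)
    rw [one_mul] at hs
    exact ⟨hb, exp f * f', fun h x ξ => (hd h x ξ).exp, ih.mul calculus_xi hs⟩

lemma symbX_exp {f f' : SymbolFamily} (hf : SymbXi 1 f) (hd : DerivX f f')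
    (hf' : ∀ n, SymbX n gainX f') (n : ℕ) : SymbX n (exp f) (exp f) :=
  Symb.of_deriv_eq_mul calculus_x (fun _ : Unit => exp f) id hf'
    (fun _ h x ξ => (hd h x ξ).exp) (fun _ => symbXi_exp hf) n ()

/-- The phase `c φ(ξ/h) ⟨ξ⟩ₕ^(-κ(1-q)) ∫₀ˣ ⟨y⟩^(-q) ψ(⟨y⟩ / ⟨ξ⟩ₕ^κ) dy`. -/
def phase {R : ℝ} (c κ q : ℝ) (φ : Plateau R) (ψ : Cutoff) : SymbolFamily :=
  const c * plateau φ * powXi (-(κ * (1 - q))) * primitive κ q ψ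

lemma powXi_neg_mul_powXi (m : ℝ) : powXi (-m) * powXi m = 1 := by
  funext h x ξ
  simp only [powXi, Pi.mul_apply, Pi.one_apply]
  rw [← Real.rpow_add (jbh_pos h.2 ξ), neg_add_cancel, Real.rpow_zero]

lemma symbX_exp_phase {R : ℝ} (c κ : ℝ) {q : ℝ} (hq : 0 ≤ q) (hq1 : q < 1) (φ : Plateau R)
    (ψ : Cutoff) (n : ℕ) :
    SymbX n (exp (phase c κ q φ ψ)) (exp (phase c κ q φ ψ)) := by
  have hA : SymbXi (powXi (-(κ * (1 - q))))
      (const c * plateau φ * powXi (-(κ * (1 - q)))) := by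
    simpa using ((calculus_x.size_const c).mul (symbXi_plateau φ)).mul
      (symbXi_powXi (-(κ * (1 - q))))
  refine symbX_exp (f' := const c * plateau φ * powXi (-(κ * (1 - q))) *
    (powX (-q) * cutoff κ ψ)) ?_ ?_ ?_ n
  · have := hA.mul (symbXi_primitive κ hq hq1 ψ)
    rwa [powXi_neg_mul_powXi] at this
  · exact fun h x ξ => (derivX_primitive κ q ψ h x ξ).const_mul
      ((const c * plateau φ * powXi (-(κ * (1 - q)))) h x ξ)
  · intro n
    have := (symbX_of_symbXi hA (fun _ _ _ _ => rfl) n).mul calculus_x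
      ((symbX_powX (-q) n).mul calculus_x (symbX_cutoff κ (sub_nonneg.2 hq1.le) ψ n))
    convert this using 1
    have e : gainX = powX (-q) * powX (-(1 - q)) := by
      funext h x ξ
      simp only [gainX, powX, Pi.mul_apply]
      rw [← Real.rpow_add (jb_pos x), ← Real.rpow_neg_one]
      congr 1; ring
    rw [e]
    linear_combination (-(powX (-q) * powX (-(1 - q)))) * powXi_neg_mul_powXi (κ * (1 - q))

lemma exists_bound_iteratedDeriv_exp_phase {R : ℝ} (c κ : ℝ) {q : ℝ} (hq : 0 ≤ q) (hq1 : q < 1)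
    (φ : Plateau R) (ψ : Cutoff) (α β : ℕ) :
    ∃ C : ℝ, ∀ h x ξ,
      |iteratedDeriv α (fun ξ' => iteratedDeriv β
        (fun x' => exp (phase c κ q φ ψ) h x' ξ') x) ξ| ≤
      C * jb x ^ (-(β : ℝ)) * jbh h ξ ^ (-(α : ℝ)) * exp (phase c κ q φ ψ) h x ξ := by
  obtain ⟨f, hf, he⟩ := (symbX_exp_phase c κ hq hq1 φ ψ β).exists_iteratedDeriv
  obtain ⟨C, hC⟩ := exists_bound_iteratedDeriv (hf α)
  refine ⟨C, fun h x ξ => ?_⟩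
  simp only [he]
  refine (hC h x ξ).trans_eq ?_
  simp only [gainX, gainXi, Pi.mul_apply, Pi.pow_apply]
  rw [Real.rpow_neg (jb_pos x).le, Real.rpow_neg (jbh_pos h.2 ξ).le, Real.rpow_natCast,
    Real.rpow_natCast, inv_pow, inv_pow]
  ring

end SymbolFamily

lemma deriv_eq_zero_of_const_outside {ω : ℝ → ℝ} {R : ℝ}
    (hp : ∀ ξ₁ ξ₂ : ℝ, R ≤ ξ₁ → R ≤ ξ₂ → ω ξ₁ = ω ξ₂)
    (hm : ∀ ξ₁ ξ₂ : ℝ, ξ₁ ≤ -R → ξ₂ ≤ -R → ω ξ₁ = ω ξ₂) (t : ℝ) (ht : R < |t|) :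
    deriv ω t = 0 := by
  have : ω =ᶠ[nhds t] fun _ => ω t := by
    rcases lt_abs.1 ht with h | h
    · filter_upwards [Ioi_mem_nhds h] with s hs using hp s t (le_of_lt hs) h.le
    · filter_upwards [Iio_mem_nhds (lt_neg_of_lt_neg h)] with s hs using
        hm s t (le_of_lt hs) (le_neg_of_le_neg h.le)
  rw [this.deriv_eq, deriv_const]

/-- estimates for `∂_ξ^α ∂_x^β e^{±λ_{p-k}(x,ξ)}`, where
`λ_{p-k}(x,ξ) = M·ω(ξ/h)·⟨ξ⟩ₕ^{-k+1}·∫₀ˣ ⟨y⟩^{-(p-k)/(p-1)} ψ(⟨y⟩/⟨ξ⟩ₕ^{p-1}) dy`;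
the constant may depend on `α, β, k, M, R, ω, ψ` but not on `h, x, ξ`. -/
theorem stmt8 (p k : ℕ) (hp : 2 ≤ p) (hk2 : 2 ≤ k) (hkp : k ≤ p - 1)
    (M R : ℝ) (hM : 0 < M) (hR : 1 < R)
    (ω : ℝ → ℝ) (hω : ContDiff ℝ (⊤ : ℕ∞) ω) (hωb : ∀ ξ : ℝ, |ω ξ| ≤ 1)
    (hω0 : ∀ ξ : ℝ, |ξ| ≤ 1 → ω ξ = 0)
    (hωcp : ∀ ξ₁ ξ₂ : ℝ, R ≤ ξ₁ → R ≤ ξ₂ → ω ξ₁ = ω ξ₂)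
    (hωcm : ∀ ξ₁ ξ₂ : ℝ, ξ₁ ≤ -R → ξ₂ ≤ -R → ω ξ₁ = ω ξ₂)
    (ψ : ℝ → ℝ) (hψ : ContDiff ℝ (⊤ : ℕ∞) ψ) (hψc : HasCompactSupport ψ)
    (hψ01 : ∀ y : ℝ, 0 ≤ ψ y ∧ ψ y ≤ 1)
    (hψ1 : ∀ y : ℝ, |y| ≤ 1 / 2 → ψ y = 1)
    (hψ0 : ∀ y : ℝ, 1 ≤ |y| → ψ y = 0) :
    ∀ α β : ℕ, ∃ C > 0, ∀ h : ℝ, 1 ≤ h → ∀ x ξ : ℝ,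
      ∀ s : ℝ, s = 1 ∨ s = -1 →
        |iteratedDeriv α
            (fun ξ' => iteratedDeriv β
              (fun x' => Real.exp
                (s * (M * ω (ξ' / h) * jbh h ξ' ^ (-(k : ℝ) + 1) *
                  ∫ y in (0:ℝ)..x',
                    jb y ^ (-(((p : ℝ) - k) / ((p : ℝ) - 1))) *
                      ψ (jb y / jbh h ξ' ^ ((p : ℝ) - 1))))) x) ξ| ≤
          C * jb x ^ (-(β : ℝ)) * jbh h ξ ^ (-(α : ℝ)) *
            Real.exp (s * (M * ω (ξ / h) * jbh h ξ ^ (-(k : ℝ) + 1) *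
              ∫ y in (0:ℝ)..x,
                jb y ^ (-(((p : ℝ) - k) / ((p : ℝ) - 1))) *
                  ψ (jb y / jbh h ξ ^ ((p : ℝ) - 1)))) := by
  intro α β
  have hp1 : (0 : ℝ) < (p : ℝ) - 1 := by
    have : (2 : ℝ) ≤ p := by exact_mod_cast hp
    linarith
  have hk2' : (2 : ℝ) ≤ k := by exact_mod_cast hk2
  have hkp' : (k : ℝ) ≤ p := by exact_mod_cast hkp.trans (Nat.sub_le p 1)
  have hq : 0 ≤ ((p : ℝ) - k) / ((p : ℝ) - 1) := div_nonneg (by linarith) hp1.le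
  have hq1 : ((p : ℝ) - k) / ((p : ℝ) - 1) < 1 := (div_lt_one hp1).2 (by linarith)
  have hexp : -(((p : ℝ) - 1) * (1 - ((p : ℝ) - k) / ((p : ℝ) - 1))) = -(k : ℝ) + 1 := by
    field_simp
    ring
  let φ : SymbolFamily.Plateau R := ⟨ω, hω, ⟨1, hωb⟩, deriv_eq_zero_of_const_outside hωcp hωcm⟩
  let χ : SymbolFamily.Cutoff := ⟨ψ, hψ, fun t ht => hψ0 t ht.le⟩
  have hphase : ∀ (s : ℝ) (h : {h : ℝ // 1 ≤ h}) (x ξ : ℝ),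
      SymbolFamily.exp (SymbolFamily.phase (s * M) ((p : ℝ) - 1)
        (((p : ℝ) - k) / ((p : ℝ) - 1)) φ χ) h x ξ =
      Real.exp (s * (M * ω (ξ / h) * jbh h ξ ^ (-(k : ℝ) + 1) *
        ∫ y in (0:ℝ)..x, jb y ^ (-(((p : ℝ) - k) / ((p : ℝ) - 1))) *
          ψ (jb y / jbh h ξ ^ ((p : ℝ) - 1)))) := by
    intro s h x ξ
    simp only [SymbolFamily.exp, SymbolFamily.phase, SymbolFamily.plateau, SymbolFamily.const, SymbolFamily.powXi,
      SymbolFamily.primitive, Pi.mul_apply, hexp, φ, χ]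
    simp only [mul_assoc]
  have key : ∀ s : ℝ, ∃ C : ℝ, ∀ h : ℝ, 1 ≤ h → ∀ x ξ : ℝ,
      |iteratedDeriv α (fun ξ' => iteratedDeriv β (fun x' => Real.exp
        (s * (M * ω (ξ' / h) * jbh h ξ' ^ (-(k : ℝ) + 1) *
          ∫ y in (0:ℝ)..x', jb y ^ (-(((p : ℝ) - k) / ((p : ℝ) - 1))) *
            ψ (jb y / jbh h ξ' ^ ((p : ℝ) - 1))))) x) ξ| ≤
      C * jb x ^ (-(β : ℝ)) * jbh h ξ ^ (-(α : ℝ)) *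
        Real.exp (s * (M * ω (ξ / h) * jbh h ξ ^ (-(k : ℝ) + 1) *
          ∫ y in (0:ℝ)..x, jb y ^ (-(((p : ℝ) - k) / ((p : ℝ) - 1))) *
            ψ (jb y / jbh h ξ ^ ((p : ℝ) - 1)))) := fun s => by
    obtain ⟨C, hC⟩ := SymbolFamily.exists_bound_iteratedDeriv_exp_phase (s * M) ((p : ℝ) - 1)
      hq hq1 φ χ α β
    simp only [hphase] at hC
    exact ⟨C, fun h hh => hC ⟨h, hh⟩⟩
  obtain ⟨C₁, hC₁⟩ := key 1
  obtain ⟨C₂, hC₂⟩ := key (-1)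
  refine ⟨max (max C₁ C₂) 1, by positivity, fun h hh x ξ s hs => ?_⟩
  have hx := Real.rpow_nonneg (SymbolFamily.jb_pos x).le (-(β : ℝ))
  have hξ := Real.rpow_nonneg (SymbolFamily.jbh_pos hh ξ).le (-(α : ℝ))
  rcases hs with rfl | rfl
  · refine (hC₁ h hh x ξ).trans ?_
    gcongr
    exact (le_max_left _ _).trans (le_max_left _ _)
  · refine (hC₂ h hh x ξ).trans ?_
    gcongr
    exact (le_max_right _ _).trans (le_max_left _ _)
end
end
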